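/- Prescribed-performance satisfaction lemma. Let h : ℝ^p → ℝ, y : [0,∞) → ℝ^p, 0 ≤ a ≤ b, and choose t* (with t* = a for the always type, t* ∈ [a,b] for the eventually type), ρ^max ∈ ℝ, r ∈ ℝ with r < ρ^max and h(y(0)) > r if t* = 0, γ⁰ ∈ (ρ^max − h(y(0)), ∞) if t* > 0 and γ⁰ ∈ (ρ^max − h(y(0)), ρ^max − r] if t* = 0, γ^∞ ∈ (0, min(γ⁰, ρ^max − r)], and l ≥ 0 arbitrary if −γ⁰ + ρ^max ≥ r, while l = −ln((r + γ^∞ − ρ^max)/(−(γ⁰ − γ^∞)))/t* if −γ⁰ + ρ^max < r (assuming in that case γ^∞ < ρ^max − r and γ⁰ > γ^∞). Set γ(t) = (γ⁰ − γ^∞)·exp(−l·t) + γ^∞. If the funnel inequality −γ(t) + ρ^max < h(y(t)) < ρ^max holds for all t ≥ 0, then r ≤ inf_{t∈[a,b]} h(y(t)) ≤ ρ^max in the always case and r ≤ sup_{t∈[a,b]} h(y(t)) ≤ ρ^max in the eventually case; in particular, if r > 0 the corresponding temporal task is satisfied. -/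

import Mathlib

/-! The rate `l` is nonnegative, so the performance function `γ` is nonincreasing, and `l` is chosen
so that `γ(t*) ≤ ρmax - r`, with equality when the funnel starts wider than `ρmax - r`. The lower
side of the funnel therefore stays above `r` from `t*` on. In the always case this covers the whole
window and bounds the infimum; in the eventually case the single instant `t*` bounds the supremum.
-/

/-- The performance function `γ(t) = (γ⁰ − γ^∞)·exp(−l·t) + γ^∞`. -/
noncomputable def perf (γ0 γinf l t : ℝ) : ℝ := (γ0 - γinf) * Real.exp (-l * t) + γinf

open Set

section Performance

variable {γ0 γinf l w τ : ℝ}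

lemma perf_zero (γ0 γinf l : ℝ) : perf γ0 γinf l 0 = γ0 := by
  simp [perf]

lemma perf_antitone (hγ : γinf ≤ γ0) (hl : 0 ≤ l) : Antitone (perf γ0 γinf l) := by
  intro s t hst
  have hexponent : -l * t ≤ -l * s := mul_le_mul_of_nonpos_left hst (neg_nonpos.2 hl)
  have hexp : Real.exp (-l * t) ≤ Real.exp (-l * s) := Real.exp_le_exp.2 hexponent
  exact add_le_add (mul_le_mul_of_nonneg_left hexp (sub_nonneg.2 hγ)) le_rfl

/-- The decay rate that steers the performance function from its initial width `γ0` to the width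
`w` at time `τ`, found by solving `(γ0 - γinf) * exp (-l * τ) + γinf = w` for `l`. -/
noncomputable def decayRate (γ0 γinf w τ : ℝ) : ℝ :=
  -Real.log ((w - γinf) / (γ0 - γinf)) / τ

lemma decayRate_nonneg (hγw : γinf ≤ w) (hwγ : w ≤ γ0) (hτ : 0 ≤ τ) :
    0 ≤ decayRate γ0 γinf w τ := by
  have hspread : 0 ≤ γ0 - γinf := sub_nonneg.2 (hγw.trans hwγ)
  have hlog : Real.log ((w - γinf) / (γ0 - γinf)) ≤ 0 :=
    Real.log_nonpos (div_nonneg (sub_nonneg.2 hγw) hspread)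
      (div_le_one_of_le₀ (sub_le_sub_right hwγ γinf) hspread)
  exact div_nonneg (neg_nonneg.2 hlog) hτ

lemma perf_decayRate (hw : γinf < w) (hγ : γinf < γ0) (hτ : τ ≠ 0) :
    perf γ0 γinf (decayRate γ0 γinf w τ) τ = w := by
  have hspread : 0 < γ0 - γinf := sub_pos.2 hγ
  have hratio : 0 < (w - γinf) / (γ0 - γinf) := div_pos (sub_pos.2 hw) hspread
  have hexponent : -decayRate γ0 γinf w τ * τ = Real.log ((w - γinf) / (γ0 - γinf)) := by
    rw [decayRate, neg_div, neg_neg, div_mul_cancel₀ _ hτ]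
  rw [perf, hexponent, Real.exp_log hratio, mul_div_cancel₀ _ hspread.ne', sub_add_cancel]

end Performance

section Funnel

variable {ρ : ℝ → ℝ} {S : Set ℝ} {tstar ρmax r γ0 γinf l : ℝ}

lemma rate_nonneg_and_perf_le (htstar : 0 ≤ tstar) (hγ0 : tstar = 0 → γ0 ≤ ρmax - r)
    (hγinf : γinf ≤ γ0)
    (hl : if r ≤ -γ0 + ρmax then 0 ≤ l
      else γinf < ρmax - r ∧ γinf < γ0 ∧
        l = -Real.log ((r + γinf - ρmax) / (-(γ0 - γinf))) / tstar) :
    0 ≤ l ∧ perf γ0 γinf l tstar ≤ ρmax - r := by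
  split_ifs at hl with hnarrow
  · refine ⟨hl, ?_⟩
    calc perf γ0 γinf l tstar ≤ perf γ0 γinf l 0 := perf_antitone hγinf hl htstar
      _ = γ0 := perf_zero γ0 γinf l
      _ ≤ ρmax - r := by linarith
  · obtain ⟨hγw, hγ, hl⟩ := hl
    have hwide : ρmax - r < γ0 := by linarith
    have htstar_ne : tstar ≠ 0 := fun h0 => hwide.not_ge (hγ0 h0)
    have hrate : l = decayRate γ0 γinf (ρmax - r) tstar := by
      rw [hl, decayRate, show r + γinf - ρmax = -(ρmax - r - γinf) by ring, neg_div_neg_eq]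
    rw [hrate]
    exact ⟨decayRate_nonneg hγw.le hwide.le htstar, (perf_decayRate hγw hγ htstar_ne).le⟩

theorem prescribed_performance_satisfaction_general (hS : S ⊆ Ici 0)
    (hγ0 : tstar = 0 → γ0 ≤ ρmax - r) (hγinf : γinf ≤ γ0)
    (hl : if r ≤ -γ0 + ρmax then 0 ≤ l
      else γinf < ρmax - r ∧ γinf < γ0 ∧
        l = -Real.log ((r + γinf - ρmax) / (-(γ0 - γinf))) / tstar)
    (hfunnel : ∀ t ∈ S, -perf γ0 γinf l t + ρmax < ρ t ∧ ρ t < ρmax) :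
    (IsLeast S tstar → sInf (ρ '' S) ∈ Icc r ρmax) ∧
    (tstar ∈ S → sSup (ρ '' S) ∈ Ioc r ρmax) := by
  have hlower : tstar ∈ S → ∀ t ∈ S, tstar ≤ t → r < ρ t := by
    intro hmem t ht htt
    obtain ⟨hl0, hwidth⟩ := rate_nonneg_and_perf_le (hS hmem) hγ0 hγinf hl
    have hwidth_t : perf γ0 γinf l t ≤ ρmax - r := (perf_antitone hγinf hl0 htt).trans hwidth
    linarith [(hfunnel t ht).1]
  have hupper : ρmax ∈ upperBounds (ρ '' S) := forall_mem_image.2 fun t ht => (hfunnel t ht).2.le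
  refine ⟨fun hleast => ?_, fun hmem => ?_⟩
  · have hr : r ∈ lowerBounds (ρ '' S) :=
      forall_mem_image.2 fun t ht => (hlower hleast.1 t ht (hleast.2 ht)).le
    have himage : ρ tstar ∈ ρ '' S := mem_image_of_mem ρ hleast.1
    exact ⟨le_csInf ⟨_, himage⟩ hr, (csInf_le ⟨r, hr⟩ himage).trans (hupper himage)⟩
  · have himage : ρ tstar ∈ ρ '' S := mem_image_of_mem ρ hmem
    exact ⟨(hlower hmem tstar hmem le_rfl).trans_le (le_csSup ⟨ρmax, hupper⟩ himage),
      csSup_le ⟨_, himage⟩ hupper⟩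

end Funnel

/-- prescribed-performance satisfaction lemma: with the parameter choice
(8)–(13) for `t*, ρ^max, r, γ⁰, γ^∞, l`, if the funnel inequality
`−γ(t) + ρ^max < h(y(t)) < ρ^max` holds for all `t ≥ 0`, then
`r ≤ inf_{t∈[a,b]} h(y(t)) ≤ ρ^max` in the always case (`t* = a`) and
`r ≤ sup_{t∈[a,b]} h(y(t)) ≤ ρ^max` in the eventually case (`t* ∈ [a,b]`);
in particular a positive `r` yields a positive robustness value. -/
theorem prescribed_performance_satisfaction (p : ℕ) (h : (Fin p → ℝ) → ℝ)
    (y : ℝ → Fin p → ℝ) (a b tstar ρmax r γ0 γinf l : ℝ)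
    (ha : 0 ≤ a) (hab : a ≤ b)
    (hrρ : r < ρmax)
    (hr0 : tstar = 0 → r < h (y 0))
    (hγ0 : if 0 < tstar then γ0 ∈ Set.Ioi (ρmax - h (y 0))
      else γ0 ∈ Set.Ioc (ρmax - h (y 0)) (ρmax - r))
    (hγinf : γinf ∈ Set.Ioc 0 (min γ0 (ρmax - r)))
    (hl : if r ≤ -γ0 + ρmax then 0 ≤ l
      else γinf < ρmax - r ∧ γinf < γ0 ∧
        l = -Real.log ((r + γinf - ρmax) / (-(γ0 - γinf))) / tstar)
    (hfunnel : ∀ t ≥ (0 : ℝ),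
      -perf γ0 γinf l t + ρmax < h (y t) ∧ h (y t) < ρmax) :
    (tstar = a →
      r ≤ sInf ((fun t => h (y t)) '' Set.Icc a b) ∧
      sInf ((fun t => h (y t)) '' Set.Icc a b) ≤ ρmax) ∧
    (tstar ∈ Set.Icc a b →
      r ≤ sSup ((fun t => h (y t)) '' Set.Icc a b) ∧
      sSup ((fun t => h (y t)) '' Set.Icc a b) ≤ ρmax) ∧
    (0 < r →
      (tstar = a → 0 < sInf ((fun t => h (y t)) '' Set.Icc a b)) ∧
      (tstar ∈ Set.Icc a b → 0 < sSup ((fun t => h (y t)) '' Set.Icc a b))) := by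
  obtain ⟨hinf, hsup⟩ := prescribed_performance_satisfaction_general
    (ρ := fun t => h (y t)) (S := Icc a b) (fun t ht => ha.trans ht.1)
    (fun h0 => (if_neg h0.not_gt ▸ hγ0).2) (hγinf.2.trans (min_le_left _ _)) hl
    (fun t ht => hfunnel t (ha.trans ht.1))
  have hleast : tstar = a → IsLeast (Icc a b) tstar := by
    rintro rfl
    exact isLeast_Icc hab
  exact ⟨fun hta => hinf (hleast hta), fun hts => ⟨(hsup hts).1.le, (hsup hts).2⟩,
    fun hr => ⟨fun hta => hr.trans_le (hinf (hleast hta)).1, fun hts => hr.trans (hsup hts).1⟩⟩
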